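/- There exists an absolute constant C > 0 such that for all 0 < ε ≤ 1/2 one has |L(ε) − 3/π| ≤ C·√ε·|log ε|. -/

import Mathlib

/-- `L ε = 2√ε · Σ_{q ≥ 1, q² ≤ 1/ε} φ(q)·√(1/q² − ε)`, the total length of the part of the
segment `{(x, ε) : 0 ≤ x ≤ 1}` lying inside Ford disks. -/
noncomputable def L (ε : ℝ) : ℝ :=
  2 * Real.sqrt ε *
    ∑' q : ℕ, if 1 ≤ q ∧ (q : ℝ) ^ 2 ≤ 1 / ε then
      (Nat.totient q : ℝ) * Real.sqrt (1 / (q : ℝ) ^ 2 - ε) else 0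

/-!
Write `x = 1/√ε` and `f t = √(1 - t²)`. Then `L ε = (2/x) ∑_{q ≤ x} (φ(q)/q) f(q/x)`. Expanding
`φ(q)/q = ∑_{d ∣ q} μ(d)/d` and summing over multiples of `d` first, the inner sums
`∑_{m ≤ x/d} f(m/(x/d))` are Riemann sums of a decreasing function, so each equals
`(x/d) ∫₀¹ f = (x/d) (π/4)` up to an error at most `f 0 = 1`. The main terms add up to
`(π/4) x ∑_{d ≤ x} μ(d)/d²`, which is `(π/4)(6/π²) x` up to `O(1)`, and the errors, weighted by
`1/d`, add up to at most a harmonic sum, whence the factor `|log ε|`.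
-/

open Finset Real
open scoped ArithmeticFunction.Moebius

theorem sum_Ioc_sum_divisors {M : Type*} [AddCommMonoid M] (F : ℕ → ℕ → M) (N : ℕ) :
    ∑ q ∈ Ioc 0 N, ∑ d ∈ q.divisors, F d q
      = ∑ d ∈ Ioc 0 N, ∑ m ∈ Ioc 0 (N / d), F d (d * m) := by
  have swap : ∑ q ∈ Ioc 0 N, ∑ d ∈ q.divisors, F d q
      = ∑ d ∈ Ioc 0 N, ∑ q ∈ Ioc 0 N with d ∣ q, F d q := by
    refine sum_comm' fun q d ↦ ?_
    simp only [Nat.mem_divisors, mem_filter, mem_Ioc]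
    constructor
    · rintro ⟨hq, hdq, -⟩
      exact ⟨⟨hq, hdq⟩, Nat.pos_of_dvd_of_pos hdq hq.1, (Nat.le_of_dvd hq.1 hdq).trans hq.2⟩
    · rintro ⟨⟨hq, hdq⟩, -⟩
      exact ⟨hq, hdq, hq.1.ne'⟩
  rw [swap]
  refine sum_congr rfl fun d hd ↦ ?_
  have hd0 : 0 < d := (mem_Ioc.mp hd).1
  symm
  refine sum_nbij' (d * ·) (· / d) ?_ ?_ ?_ ?_ fun _ _ ↦ rfl
  · simp +contextual [Nat.le_div_iff_mul_le hd0, mul_comm, hd0]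
  · simp only [mem_filter, mem_Ioc]
    rintro q ⟨⟨hq, hqN⟩, hdq⟩
    exact ⟨Nat.div_pos (Nat.le_of_dvd hq hdq) hd0, Nat.div_le_div_right hqN⟩
  · exact fun m _ ↦ Nat.mul_div_cancel_left m hd0
  · exact fun q hq ↦ Nat.mul_div_cancel' (mem_filter.mp hq).2

theorem sum_Ioc_floor_sum_divisors_mul_comp_div (a : ℕ → ℝ) (f : ℝ → ℝ) (x : ℝ) :
    ∑ q ∈ Ioc 0 ⌊x⌋₊, (∑ d ∈ q.divisors, a d / d) * f (q / x)
      = ∑ d ∈ Ioc 0 ⌊x⌋₊, a d / d * ∑ m ∈ Ioc 0 ⌊x / d⌋₊, f (m / (x / d)) := by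
  simp_rw [sum_mul, mul_sum]
  rw [sum_Ioc_sum_divisors (fun d q ↦ a d / d * f (q / x))]
  simp_rw [Nat.floor_div_natCast, Nat.cast_mul, div_div_eq_mul_div, mul_comm]

theorem totient_div_self_eq_sum_moebius_div {q : ℕ} (hq : 0 < q) :
    (q.totient : ℝ) / q = ∑ d ∈ q.divisors, (μ d : ℝ) / d := by
  have inversion : ∑ x ∈ q.divisorsAntidiagonal, (μ x.1 : ℝ) * x.2 = q.totient :=
    ArithmeticFunction.sum_eq_iff_sum_mul_moebius_eq
      (f := fun n ↦ (n.totient : ℝ)) (g := fun n ↦ (n : ℝ)) |>.mp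
      (fun n _ ↦ by exact_mod_cast n.sum_totient) q hq
  rw [← inversion, Nat.sum_divisorsAntidiagonal fun d e : ℕ ↦ (μ d : ℝ) * e, sum_div]
  refine sum_congr rfl fun d hd ↦ ?_
  have hdq : d ∣ q := Nat.dvd_of_mem_divisors hd
  have hd0 : (d : ℝ) ≠ 0 := by exact_mod_cast (Nat.pos_of_mem_divisors hd).ne'
  have hq0 : (q : ℝ) ≠ 0 := by exact_mod_cast hq.ne'
  rw [Nat.cast_div hdq hd0]
  field_simp

theorem hasSum_moebius_div_sq : HasSum (fun d : ℕ ↦ (μ d : ℝ) / (d : ℝ) ^ 2) (6 / π ^ 2) := by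
  have one_lt_re : 1 < (2 : ℂ).re := by norm_num
  have value : LSeries (fun n ↦ (μ n : ℂ)) 2 = ((6 / π ^ 2 : ℝ) : ℂ) := by
    have zeta_mul := ArithmeticFunction.LSeries_zeta_mul_Lseries_moebius one_lt_re
    rw [ArithmeticFunction.LSeries_zeta_eq_riemannZeta one_lt_re, riemannZeta_two] at zeta_mul
    have hpi : (π : ℂ) ≠ 0 := by exact_mod_cast pi_ne_zero
    push_cast
    field_simp at zeta_mul ⊢
    linear_combination zeta_mul
  have summable := ArithmeticFunction.LSeriesSummable_moebius_iff.mpr one_lt_re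
  rw [← Complex.hasSum_ofReal, ← value]
  refine summable.hasSum.congr_fun fun n ↦ ?_
  rcases eq_or_ne n 0 with rfl | hn
  · simp
  · rw [LSeries.term_of_ne_zero hn]
    norm_cast

theorem abs_sum_range_sub_le_of_abs_le_inv_sq {a : ℕ → ℝ} {A : ℝ} (hA : HasSum a A) {N : ℕ}
    (ha : ∀ n, N < n → |a n| ≤ ((n : ℝ) ^ 2)⁻¹) :
    |∑ n ∈ range (N + 1), a n - A| ≤ 2 / (N + 1) := by
  refine le_of_tendsto (tendsto_const_nhds.sub hA.tendsto_sum_nat).abs ?_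
  filter_upwards [Filter.eventually_ge_atTop (N + 1)] with n hn
  calc |∑ i ∈ range (N + 1), a i - ∑ i ∈ range n, a i|
      = |∑ i ∈ Ioo N n, a i| := by
        rw [abs_sub_comm, ← sum_Ico_eq_sub _ hn, Ico_add_one_left_eq_Ioo]
    _ ≤ ∑ i ∈ Ioo N n, |a i| := abs_sum_le_sum_abs _ _
    _ ≤ ∑ i ∈ Ioo N n, ((i : ℝ) ^ 2)⁻¹ := sum_le_sum fun i hi ↦ ha i (mem_Ioo.mp hi).1
    _ ≤ 2 / (N + 1) := sum_Ioo_inv_sq_le N n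

theorem abs_sum_Ioc_div_sq_sub_le {a : ℕ → ℝ} (ha : ∀ d, |a d| ≤ 1) {A : ℝ}
    (hA : HasSum (fun d : ℕ ↦ a d / (d : ℝ) ^ 2) A) (N : ℕ) :
    |∑ d ∈ Ioc 0 N, a d / (d : ℝ) ^ 2 - A| ≤ 2 / (N + 1) := by
  have summand_le (d : ℕ) : |a d / (d : ℝ) ^ 2| ≤ ((d : ℝ) ^ 2)⁻¹ := by
    rw [abs_div, abs_of_nonneg (sq_nonneg (d : ℝ)), ← one_div]
    gcongr
    exact ha d
  have sum_eq : ∑ d ∈ Ioc 0 N, a d / (d : ℝ) ^ 2 = ∑ d ∈ range (N + 1), a d / (d : ℝ) ^ 2 := by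
    rw [sum_range_eq_add_Ico _ (by lia : 0 < N + 1), Ico_add_one_right_eq_Icc]
    simp [← Icc_add_one_left_eq_Ioc]
  rw [sum_eq]
  exact abs_sum_range_sub_le_of_abs_le_inv_sq hA fun d _ ↦ summand_le d

theorem integral_le_mul_of_antitoneOn {g : ℝ → ℝ} {a b : ℝ} (hab : a ≤ b)
    (hg : AntitoneOn g (Set.Icc a b)) : ∫ t in a..b, g t ≤ (b - a) * g a := by
  have integrable : IntervalIntegrable g MeasureTheory.volume a b :=
    AntitoneOn.intervalIntegrable (by rwa [Set.uIcc_of_le hab])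
  calc ∫ t in a..b, g t ≤ ∫ _ in a..b, g a :=
        intervalIntegral.integral_mono_on hab integrable intervalIntegrable_const
          fun t ht ↦ hg (Set.left_mem_Icc.mpr hab) ht ht.1
    _ = (b - a) * g a := by simp

theorem abs_sum_Ioc_floor_sub_integral_le {g : ℝ → ℝ} {x : ℝ} (hx : 0 ≤ x)
    (hg : AntitoneOn g (Set.Icc 0 x)) (hgx : 0 ≤ g x) :
    |∑ m ∈ Ioc 0 ⌊x⌋₊, g m - ∫ t in (0 : ℝ)..x, g t| ≤ g 0 := by
  set n := ⌊x⌋₊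
  have hnx : (n : ℝ) ≤ x := Nat.floor_le hx
  have hn0 : (0 : ℝ) ≤ n := n.cast_nonneg
  have anti_init : AntitoneOn g (Set.Icc 0 n) := hg.mono (Set.Icc_subset_Icc_right hnx)
  have anti_last : AntitoneOn g (Set.Icc n x) := hg.mono (Set.Icc_subset_Icc_left hn0)
  have split : ∫ t in (0 : ℝ)..x, g t = (∫ t in (0 : ℝ)..n, g t) + ∫ t in (n : ℝ)..x, g t :=
    (intervalIntegral.integral_add_adjacent_intervals
      (AntitoneOn.intervalIntegrable (by rwa [Set.uIcc_of_le hn0]))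
      (AntitoneOn.intervalIntegrable (by rwa [Set.uIcc_of_le hnx]))).symm
  have sum_eq : ∑ m ∈ Ioc 0 n, g m = ∑ i ∈ range n, g (i + 1 : ℕ) := by
    rw [← Ico_add_one_add_one_eq_Ioc, range_eq_Ico, ← sum_Ico_add']
  have sum_le : ∑ i ∈ range n, g (i + 1 : ℕ) ≤ ∫ t in (0 : ℝ)..n, g t := by
    simpa using AntitoneOn.sum_le_integral (x₀ := 0) (a := n) (by simpa using anti_init)
  have le_sum : ∫ t in (0 : ℝ)..n, g t ≤ ∑ i ∈ range n, g i := by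
    simpa using AntitoneOn.integral_le_sum (x₀ := 0) (a := n) (by simpa using anti_init)
  have last_nonneg : 0 ≤ ∫ t in (n : ℝ)..x, g t :=
    intervalIntegral.integral_nonneg hnx fun t ht ↦
      hgx.trans (anti_last ht (Set.right_mem_Icc.mpr hnx) ht.2)
  have last_le : ∫ t in (n : ℝ)..x, g t ≤ g n :=
    have hgn : 0 ≤ g n :=
      hgx.trans (anti_last (Set.left_mem_Icc.mpr hnx) (Set.right_mem_Icc.mpr hnx) hnx)
    (integral_le_mul_of_antitoneOn hnx anti_last).trans
      (mul_le_of_le_one_left hgn (by linarith [Nat.lt_floor_add_one x]))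
  have telescope : ∑ i ∈ range n, g i + g n = ∑ i ∈ range n, g (i + 1 : ℕ) + g 0 := by
    rw [← sum_range_succ (fun i : ℕ ↦ g i), sum_range_succ' (fun i : ℕ ↦ g i), Nat.cast_zero]
  have hg0 : 0 ≤ g 0 := hgx.trans (hg (Set.left_mem_Icc.mpr hx) (Set.right_mem_Icc.mpr hx) hx)
  rw [sum_eq, split, abs_le]
  exact ⟨by linarith, by linarith [hg0]⟩

theorem abs_sum_Ioc_floor_comp_div_sub_le {f : ℝ → ℝ} (hf : AntitoneOn f (Set.Icc 0 1))
    (hf1 : 0 ≤ f 1) {x : ℝ} (hx : 0 < x) :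
    |∑ m ∈ Ioc 0 ⌊x⌋₊, f (m / x) - x * ∫ t in (0 : ℝ)..1, f t| ≤ f 0 := by
  have anti : AntitoneOn (fun t ↦ f (t / x)) (Set.Icc 0 x) := fun s hs t ht hst ↦
    hf ⟨div_nonneg hs.1 hx.le, (div_le_one hx).mpr hs.2⟩
      ⟨div_nonneg ht.1 hx.le, (div_le_one hx).mpr ht.2⟩ (by gcongr)
  simpa [hx.ne', intervalIntegral.integral_comp_div] using
    abs_sum_Ioc_floor_sub_integral_le hx.le anti (by simpa [hx.ne'] using hf1)

theorem abs_sum_div_mul_riemannSum_sub_le {f : ℝ → ℝ} (hf : AntitoneOn f (Set.Icc 0 1))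
    (hf1 : 0 ≤ f 1) {a : ℕ → ℝ} (ha : ∀ d, |a d| ≤ 1) {x : ℝ} (hx : 1 ≤ x) :
    |∑ d ∈ Ioc 0 ⌊x⌋₊, a d / d *
      (∑ m ∈ Ioc 0 ⌊x / d⌋₊, f (m / (x / d)) - x / d * ∫ t in (0 : ℝ)..1, f t)|
      ≤ f 0 * (1 + log x) := by
  have hf0 : 0 ≤ f 0 := hf1.trans (hf (by simp) (by simp) zero_le_one)
  have harmonic_le : ∑ d ∈ Ioc 0 ⌊x⌋₊, (d : ℝ)⁻¹ ≤ 1 + log x := by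
    simpa [harmonic_eq_sum_Icc, ← Icc_add_one_left_eq_Ioc] using harmonic_floor_le_one_add_log x hx
  calc _ ≤ ∑ d ∈ Ioc 0 ⌊x⌋₊, |a d / d *
          (∑ m ∈ Ioc 0 ⌊x / d⌋₊, f (m / (x / d)) - x / d * ∫ t in (0 : ℝ)..1, f t)| :=
        abs_sum_le_sum_abs _ _
    _ ≤ ∑ d ∈ Ioc 0 ⌊x⌋₊, f 0 * (d : ℝ)⁻¹ := by
        refine sum_le_sum fun d hd ↦ ?_
        have hd0 : (0 : ℝ) < d := by exact_mod_cast (mem_Ioc.mp hd).1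
        rw [abs_mul, abs_div, Nat.abs_cast, mul_comm, ← one_div]
        gcongr
        · exact abs_sum_Ioc_floor_comp_div_sub_le hf hf1 (by positivity)
        · exact ha d
    _ = f 0 * ∑ d ∈ Ioc 0 ⌊x⌋₊, (d : ℝ)⁻¹ := (mul_sum ..).symm
    _ ≤ f 0 * (1 + log x) := by gcongr

theorem abs_sum_sum_divisors_mul_sub_le {f : ℝ → ℝ} (hf : AntitoneOn f (Set.Icc 0 1))
    (hf1 : 0 ≤ f 1) {a : ℕ → ℝ} (ha : ∀ d, |a d| ≤ 1) {A : ℝ}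
    (hA : HasSum (fun d : ℕ ↦ a d / (d : ℝ) ^ 2) A) {x : ℝ} (hx : 1 ≤ x) :
    |∑ q ∈ Ioc 0 ⌊x⌋₊, (∑ d ∈ q.divisors, a d / d) * f (q / x) - A * (x * ∫ t in (0 : ℝ)..1, f t)|
      ≤ f 0 * (3 + log x) := by
  have hx0 : 0 ≤ x := zero_le_one.trans hx
  set I := ∫ t in (0 : ℝ)..1, f t
  have hI0 : 0 ≤ I := intervalIntegral.integral_nonneg zero_le_one fun t ht ↦
    hf1.trans (hf ht (by simp) ht.2)
  have hI1 : I ≤ f 0 := by simpa using integral_le_mul_of_antitoneOn zero_le_one hf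
  have decomposition :
      ∑ q ∈ Ioc 0 ⌊x⌋₊, (∑ d ∈ q.divisors, a d / d) * f (q / x) - A * (x * I)
        = ∑ d ∈ Ioc 0 ⌊x⌋₊, a d / d *
            (∑ m ∈ Ioc 0 ⌊x / d⌋₊, f (m / (x / d)) - x / d * I)
          + x * I * (∑ d ∈ Ioc 0 ⌊x⌋₊, a d / (d : ℝ) ^ 2 - A) := by
    have main_terms : ∑ d ∈ Ioc 0 ⌊x⌋₊, a d / d * (x / d * I)
        = x * I * ∑ d ∈ Ioc 0 ⌊x⌋₊, a d / (d : ℝ) ^ 2 := by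
      rw [mul_sum]
      exact sum_congr rfl fun d _ ↦ by ring
    simp_rw [sum_Ioc_floor_sum_divisors_mul_comp_div, mul_sub, sum_sub_distrib, main_terms]
    ring
  have tail_le : |x * I * (∑ d ∈ Ioc 0 ⌊x⌋₊, a d / (d : ℝ) ^ 2 - A)| ≤ f 0 * 2 := by
    rw [abs_mul, abs_of_nonneg (mul_nonneg hx0 hI0)]
    calc x * I * |∑ d ∈ Ioc 0 ⌊x⌋₊, a d / (d : ℝ) ^ 2 - A|
        ≤ x * I * (2 / (⌊x⌋₊ + 1)) := by gcongr; exact abs_sum_Ioc_div_sq_sub_le ha hA _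
      _ = I * (x / (⌊x⌋₊ + 1)) * 2 := by ring
      _ ≤ I * 1 * 2 := by
          gcongr
          exact (div_le_one (by positivity)).mpr (Nat.lt_floor_add_one x).le
      _ ≤ f 0 * 2 := by linarith
  rw [decomposition]
  refine (abs_add_le _ _).trans ?_
  linarith [abs_sum_div_mul_riemannSum_sub_le hf hf1 ha hx]

theorem integral_zero_one_sqrt_one_sub_sq : ∫ t in (0 : ℝ)..1, √(1 - t ^ 2) = π / 4 := by
  have integrable (a b : ℝ) :
      IntervalIntegrable (fun t : ℝ ↦ √(1 - t ^ 2)) MeasureTheory.volume a b :=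
    Continuous.intervalIntegrable (by fun_prop) a b
  have even : ∫ t in (-1 : ℝ)..0, √(1 - t ^ 2) = ∫ t in (0 : ℝ)..1, √(1 - t ^ 2) := by
    have reflect := intervalIntegral.integral_comp_neg (a := 0) (b := 1) fun t : ℝ ↦ √(1 - t ^ 2)
    simpa using reflect.symm
  have total := integral_sqrt_one_sub_sq
  rw [← intervalIntegral.integral_add_adjacent_intervals (integrable (-1) 0) (integrable 0 1),
    even] at total
  linarith

theorem antitoneOn_sqrt_one_sub_sq : AntitoneOn (fun t : ℝ ↦ √(1 - t ^ 2)) (Set.Ici 0) := by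
  intro s hs t _ hst
  have : 0 ≤ s := hs
  dsimp only
  gcongr

theorem L_one_div_sq {x : ℝ} (hx : 0 < x) :
    L (1 / x ^ 2) = 2 / x * ∑ q ∈ Ioc 0 ⌊x⌋₊, (q.totient : ℝ) / q * √(1 - (q / x) ^ 2) := by
  have cutoff (q : ℕ) : (1 ≤ q ∧ (q : ℝ) ^ 2 ≤ 1 / (1 / x ^ 2)) ↔ q ∈ Ioc 0 ⌊x⌋₊ := by
    rw [mem_Ioc, Nat.le_floor_iff hx.le, one_div_one_div,
      pow_le_pow_iff_left₀ q.cast_nonneg hx.le two_ne_zero, Nat.succ_le_iff]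
  have sqrt_eq : √(1 / x ^ 2) = 1 / x := by rw [← one_div_pow, sqrt_sq (by positivity)]
  rw [L, sqrt_eq, mul_one_div, tsum_eq_sum fun q hq ↦ if_neg fun h ↦ hq ((cutoff q).mp h)]
  congr 1
  refine sum_congr rfl fun q hq ↦ ?_
  have hq0 : (0 : ℝ) < q := by exact_mod_cast (mem_Ioc.mp hq).1
  have factor : 1 / (q : ℝ) ^ 2 - 1 / x ^ 2 = (1 - (q / x) ^ 2) / (q : ℝ) ^ 2 := by field_simp
  rw [if_pos ((cutoff q).mpr hq), factor, sqrt_div' _ (by positivity), sqrt_sq hq0.le]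
  ring

theorem abs_L_one_div_sq_sub_le {x : ℝ} (hx : 1 ≤ x) :
    |L (1 / x ^ 2) - 3 / π| ≤ 2 / x * (3 + log x) := by
  have hx0 : 0 < x := zero_lt_one.trans_le hx
  have estimate := abs_sum_sum_divisors_mul_sub_le
    (antitoneOn_sqrt_one_sub_sq.mono Set.Icc_subset_Ici_self) (by simp)
    (fun d ↦ by exact_mod_cast ArithmeticFunction.abs_moebius_le_one) hasSum_moebius_div_sq hx
  have main_term : 3 / π = 2 / x * (6 / π ^ 2 * (x * (π / 4))) := by
    field_simp
    norm_num
  have sum_eq : ∑ q ∈ Ioc 0 ⌊x⌋₊, (q.totient : ℝ) / q * √(1 - (q / x) ^ 2)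
      = ∑ q ∈ Ioc 0 ⌊x⌋₊, (∑ d ∈ q.divisors, (μ d : ℝ) / d) * √(1 - (q / x) ^ 2) :=
    sum_congr rfl fun q hq ↦ by rw [totient_div_self_eq_sum_moebius_div (mem_Ioc.mp hq).1]
  rw [L_one_div_sq hx0, main_term, ← mul_sub, abs_mul, abs_of_pos (by positivity), sum_eq]
  gcongr
  simpa [integral_zero_one_sqrt_one_sub_sq] using estimate

theorem abs_L_sub_le {ε : ℝ} (hε : 0 < ε) (hε1 : ε ≤ 1) :
    |L ε - 3 / π| ≤ √ε * (6 - log ε) := by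
  have ε_eq : 1 / (1 / √ε) ^ 2 = ε := by rw [one_div_pow, one_div_one_div, sq_sqrt hε.le]
  have log_eq : log (1 / √ε) = -log ε / 2 := by
    rw [one_div, log_inv, log_sqrt hε.le, neg_div]
  have bound : |L (1 / (1 / √ε) ^ 2) - 3 / π| ≤ 2 / (1 / √ε) * (3 + log (1 / √ε)) :=
    abs_L_one_div_sq_sub_le ((one_le_div (sqrt_pos.mpr hε)).mpr (sqrt_le_one.mpr hε1))
  rw [ε_eq, log_eq, div_div_eq_mul_div, div_one] at bound
  linarith

theorem L_eq_three_div_pi_add_sqrt_log_error :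
    ∃ C : ℝ, 0 < C ∧ ∀ ε : ℝ, 0 < ε → ε ≤ 1 / 2 →
      |L ε - 3 / Real.pi| ≤ C * Real.sqrt ε * |Real.log ε| := by
  refine ⟨13, by norm_num, fun ε hε hε2 ↦ ?_⟩
  have log_le : log ε ≤ -(1 / 2) := by
    have h := log_le_log hε hε2
    rw [one_div, log_inv] at h
    linarith [log_two_gt_d9]
  calc |L ε - 3 / π| ≤ √ε * (6 - log ε) := abs_L_sub_le hε (by linarith)
    _ ≤ √ε * (13 * -log ε) := by gcongr; linarith
    _ = 13 * √ε * |log ε| := by rw [abs_of_nonpos (by linarith)]; ring
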